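/- arXiv:1608.02368 — 7 statements merged into one kernel-verified Lean document; each statement's English description precedes it below -/
import Mathlib

section
/- Let a>0, θ>0, let Ω⊆ℝ² be open, and let (ρ,q) be a C² classical solution of the isothermal Euler equations with friction on Ω with ρ(t,x)>0 everywhere. Then the velocity ũ = q/ρ satisfies on Ω the second-order quasilinear hyperbolic equation ∂_tt ũ + 2·ũ·∂_tx ũ − (a² − ũ²)·∂_xx ũ = F̃(ũ, ∂_x ũ, ∂_t ũ), where F̃(u, u_x, u_t) = −2·u_t·u_x − 2·u·u_x² − (3/2)·θ·u·|u|·u_x − θ·|u|·u_t. -/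
/-!
With `u = q/ρ` and `L = log ρ`, the system becomes, where `ρ > 0`,
`L_t + u L_x + u_x = 0` and `u_t + u u_x + a² L_x + (θ/2) u |u| = 0`.
Both left-hand sides are `C¹`, since `u |u|` is differentiable with derivative `2 |u|`
(`hasDerivAt_mul_abs_self`), so the first equation may be differentiated in `x` and the second in
`t` and in `x`. Schwarz's theorem (`dir_comm`) identifies `L_tx` with `L_xt`, and eliminating
`L_x`, `L_xx` and `L_xt` from the resulting identities leaves the wave equation for `u`.

Partial derivatives are handled as directional derivatives `fderiv ℝ f p v` of functions on
`ℝ × ℝ` and transferred to the one-variable slices by `slice_t` and `slice_x`.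
-/

/-- The lower-order term `F̃(u, uₓ, uₜ) = -2 uₜ uₓ - 2 u uₓ² - (3/2) θ u |u| uₓ - θ |u| uₜ`. -/
noncomputable def Ftilde (θ u ux ut : ℝ) : ℝ :=
  -2 * ut * ux - 2 * u * ux ^ 2 - (3 / 2) * θ * u * |u| * ux - θ * |u| * ut

/-- The derivative of `f` at `p` in the direction `v`; `v = (1, 0)` gives `∂_t` and `v = (0, 1)`
gives `∂_x`. -/
noncomputable def dir (v : ℝ × ℝ) (f : ℝ × ℝ → ℝ) (p : ℝ × ℝ) : ℝ := fderiv ℝ f p v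

theorem slice_t {f : ℝ × ℝ → ℝ} {t x : ℝ} (h : DifferentiableAt ℝ f (t, x)) :
    HasDerivAt (fun s => f (s, x)) (dir (1, 0) f (t, x)) t :=
  h.hasFDerivAt.comp_hasDerivAt t ((hasDerivAt_id t).prodMk (hasDerivAt_const t x))

theorem slice_x {f : ℝ × ℝ → ℝ} {t x : ℝ} (h : DifferentiableAt ℝ f (t, x)) :
    HasDerivAt (fun y => f (t, y)) (dir (0, 1) f (t, x)) x :=
  h.hasFDerivAt.comp_hasDerivAt x ((hasDerivAt_const x t).prodMk (hasDerivAt_id x))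

theorem dir_differentiableAt {f : ℝ × ℝ → ℝ} {p : ℝ × ℝ} (h : ContDiffAt ℝ 2 f p) (v : ℝ × ℝ) :
    DifferentiableAt ℝ (dir v f) p := by
  have h1 : ContDiffAt ℝ 1 (fderiv ℝ f) p := h.fderiv_right (by norm_num)
  exact (h1.differentiableAt (by norm_num)).clm_apply (differentiableAt_const v)

/-- Schwarz's theorem for directional derivatives. -/
theorem dir_comm {f : ℝ × ℝ → ℝ} {p : ℝ × ℝ} (h : ContDiffAt ℝ 2 f p) (v w : ℝ × ℝ) :
    dir v (dir w f) p = dir w (dir v f) p := by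
  have h1 : ContDiffAt ℝ 1 (fderiv ℝ f) p := h.fderiv_right (by norm_num)
  have h2 := h1.differentiableAt (by norm_num)
  have key : ∀ v w : ℝ × ℝ, dir v (dir w f) p = fderiv ℝ (fderiv ℝ f) p v w := by
    intro v w
    have := (h2.hasFDerivAt.clm_apply (hasFDerivAt_const w p)).fderiv
    unfold dir
    rw [this]
    simp
  rw [key, key]
  exact (h.isSymmSndFDerivAt (by simp)).eq v w

theorem hasDerivAt_mul_abs_self (x : ℝ) : HasDerivAt (fun y : ℝ => y * |y|) (2 * |x|) x := by
  rcases eq_or_ne x 0 with rfl | hx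
  · -- At the origin the difference quotient of `y |y|` is `|y|`, which tends to `0`.
    rw [hasDerivAt_iff_tendsto_slope]
    have h0 : Filter.Tendsto (fun y : ℝ => |y|) (nhdsWithin 0 {0}ᶜ) (nhds (2 * |(0 : ℝ)|)) := by
      have := (continuous_abs (G := ℝ)).tendsto 0
      simpa using this.mono_left nhdsWithin_le_nhds
    refine h0.congr' ?_
    filter_upwards [self_mem_nhdsWithin] with y hy
    have hy' : y ≠ 0 := hy
    simp [slope_def_field, hy']
  · refine ((hasDerivAt_id x).mul (hasDerivAt_abs hx)).congr_deriv ?_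
    rcases lt_or_gt_of_ne hx with h | h
    · simp [h, abs_of_neg]; ring
    · simp [h, abs_of_pos]; ring

/-- For a positive `C²` classical solution `(ρ, q)` of the isothermal Euler
equations with friction on an open set `Ω`, the velocity `ũ = q/ρ` satisfies the
second-order quasilinear wave equation
`ũ_tt + 2 ũ ũ_tx - (a² - ũ²) ũ_xx = F̃(ũ, ũ_x, ũ_t)`. -/
theorem velocity_satisfies_quasilinear_wave_equation
    (a θ : ℝ) (ha : 0 < a) (hθ : 0 < θ)
    (Ω : Set (ℝ × ℝ)) (hΩ : IsOpen Ω)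
    (ρ q : ℝ → ℝ → ℝ)
    (hρC2 : ContDiffOn ℝ 2 (fun p : ℝ × ℝ => ρ p.1 p.2) Ω)
    (hqC2 : ContDiffOn ℝ 2 (fun p : ℝ × ℝ => q p.1 p.2) Ω)
    (hpos : ∀ p ∈ Ω, 0 < ρ p.1 p.2)
    (hmass : ∀ p ∈ Ω,
      deriv (fun s => ρ s p.2) p.1 + deriv (fun y => q p.1 y) p.2 = 0)
    (hmom : ∀ p ∈ Ω,
      deriv (fun s => q s p.2) p.1 +
        deriv (fun y => (q p.1 y) ^ 2 / ρ p.1 y + a ^ 2 * ρ p.1 y) p.2 =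
      -(θ / 2) * (q p.1 p.2 * |q p.1 p.2| / ρ p.1 p.2)) :
    ∀ p ∈ Ω,
      deriv (fun s => deriv (fun s' => q s' p.2 / ρ s' p.2) s) p.1 +
        2 * (q p.1 p.2 / ρ p.1 p.2) *
          deriv (fun s => deriv (fun y => q s y / ρ s y) p.2) p.1 -
        (a ^ 2 - (q p.1 p.2 / ρ p.1 p.2) ^ 2) *
          deriv (fun y => deriv (fun y' => q p.1 y' / ρ p.1 y') y) p.2 =
      Ftilde θ (q p.1 p.2 / ρ p.1 p.2)
        (deriv (fun y => q p.1 y / ρ p.1 y) p.2)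
        (deriv (fun s => q s p.2 / ρ s p.2) p.1) := by
  have hU : ContDiffOn ℝ 2 (fun p : ℝ × ℝ => q p.1 p.2 / ρ p.1 p.2) Ω :=
    hqC2.div hρC2 (fun p hp => (hpos p hp).ne')
  have hL : ContDiffOn ℝ 2 (fun p : ℝ × ℝ => Real.log (ρ p.1 p.2)) Ω :=
    hρC2.log (fun p hp => (hpos p hp).ne')
  obtain ⟨U, hUdef⟩ : ∃ U : ℝ × ℝ → ℝ, U = fun p => q p.1 p.2 / ρ p.1 p.2 := ⟨_, rfl⟩
  obtain ⟨L, hLdef⟩ : ∃ L : ℝ × ℝ → ℝ, L = fun p => Real.log (ρ p.1 p.2) := ⟨_, rfl⟩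
  rw [← hUdef] at hU
  rw [← hLdef] at hL
  have cU : ∀ p ∈ Ω, ContDiffAt ℝ 2 U p := fun p hp => hU.contDiffAt (hΩ.mem_nhds hp)
  have cL : ∀ p ∈ Ω, ContDiffAt ℝ 2 L p := fun p hp => hL.contDiffAt (hΩ.mem_nhds hp)
  have dU : ∀ p ∈ Ω, DifferentiableAt ℝ U p := fun p hp => (cU p hp).differentiableAt (by norm_num)
  have dL : ∀ p ∈ Ω, DifferentiableAt ℝ L p := fun p hp => (cL p hp).differentiableAt (by norm_num)
  -- The system in the variables `U = q/ρ` and `L = log ρ`.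
  have hsys : ∀ p ∈ Ω,
      dir (1, 0) L p + U p * dir (0, 1) L p + dir (0, 1) U p = 0 ∧
      dir (1, 0) U p + U p * dir (0, 1) U p + a ^ 2 * dir (0, 1) L p
        + θ / 2 * (U p * |U p|) = 0 := by
    rintro ⟨t, x⟩ hp
    have hr : 0 < ρ t x := hpos _ hp
    have hm := hmass _ hp
    have hM := hmom _ hp
    have dρ := (hρC2.contDiffAt (hΩ.mem_nhds hp)).differentiableAt (by norm_num)
    have dq := (hqC2.contDiffAt (hΩ.mem_nhds hp)).differentiableAt (by norm_num)
    have ρt := slice_t dρ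
    have ρx := slice_x dρ
    have qt := slice_t dq
    have qx := slice_x dq
    have eUt := (slice_t (dU _ hp)).unique (by rw [hUdef]; exact qt.div ρt hr.ne')
    have eUx := (slice_x (dU _ hp)).unique (by rw [hUdef]; exact qx.div ρx hr.ne')
    have eLt := (slice_t (dL _ hp)).unique (by rw [hLdef]; exact ρt.log hr.ne')
    have eLx := (slice_x (dL _ hp)).unique (by rw [hLdef]; exact ρx.log hr.ne')
    have flux := (((qx.pow 2).div ρx hr.ne').add (ρx.const_mul (a ^ 2))).deriv
    have e1 := ρt.deriv
    have e2 := qx.deriv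
    have e3 := qt.deriv
    have eU : U (t, x) = q t x / ρ t x := by rw [hUdef]
    generalize dir (1, 0) (fun p : ℝ × ℝ => ρ p.1 p.2) (t, x) = rt at *
    generalize dir (0, 1) (fun p : ℝ × ℝ => ρ p.1 p.2) (t, x) = rx at *
    generalize dir (1, 0) (fun p : ℝ × ℝ => q p.1 p.2) (t, x) = kt at *
    generalize dir (0, 1) (fun p : ℝ × ℝ => q p.1 p.2) (t, x) = kx at *
    dsimp only at hm hM e1 e2 e3 eUt eUx eLt eLx
    rw [e1, e2] at hm
    erw [e3, flux] at hM
    rw [eUt, eUx, eLt, eLx, eU, abs_div, abs_of_pos hr]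
    have hrt : rt = -kx := by linarith
    subst hrt
    constructor
    · field_simp
      ring
    · have hkt := eq_sub_of_add_eq hM
      rw [hkt]
      field_simp
      simp
      ring
  rintro ⟨t, x⟩ hp
  have nt : ∀ᶠ s in nhds t, (s, x) ∈ Ω :=
    (Continuous.prodMk_left x).continuousAt.eventually (hΩ.mem_nhds hp)
  have nx : ∀ᶠ y in nhds x, (t, y) ∈ Ω :=
    (Continuous.prodMk_right t).continuousAt.eventually (hΩ.mem_nhds hp)
  have u_t := slice_t (dU _ hp)
  have u_x := slice_x (dU _ hp)
  have ut_t := slice_t (dir_differentiableAt (cU _ hp) (1, 0))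
  have ut_x := slice_x (dir_differentiableAt (cU _ hp) (1, 0))
  have ux_t := slice_t (dir_differentiableAt (cU _ hp) (0, 1))
  have ux_x := slice_x (dir_differentiableAt (cU _ hp) (0, 1))
  have lt_x := slice_x (dir_differentiableAt (cL _ hp) (1, 0))
  have lx_t := slice_t (dir_differentiableAt (cL _ hp) (0, 1))
  have lx_x := slice_x (dir_differentiableAt (cL _ hp) (0, 1))
  have massx := ((lt_x.add (u_x.mul lx_x)).add ux_x).unique
    ((hasDerivAt_const x (0 : ℝ)).congr_of_eventuallyEq
      (nx.mono fun y hy => (hsys _ hy).1))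
  have momt := (((ut_t.add (u_t.mul ux_t)).add (lx_t.const_mul (a ^ 2))).add
      (((hasDerivAt_mul_abs_self _).comp t u_t).const_mul (θ / 2))).unique
    ((hasDerivAt_const t (0 : ℝ)).congr_of_eventuallyEq
      (nt.mono fun s hs => (hsys _ hs).2))
  have momx := (((ut_x.add (u_x.mul ux_x)).add (lx_x.const_mul (a ^ 2))).add
      (((hasDerivAt_mul_abs_self _).comp x u_x).const_mul (θ / 2))).unique
    ((hasDerivAt_const x (0 : ℝ)).congr_of_eventuallyEq
      (nx.mono fun y hy => (hsys _ hy).2))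
  have mom := (hsys _ hp).2
  have sU := dir_comm (cU _ hp) (0, 1) (1, 0)
  have sL := dir_comm (cL _ hp) (0, 1) (1, 0)
  have fUt : ∀ s y, (s, y) ∈ Ω →
      deriv (fun s' => q s' y / ρ s' y) s = dir (1, 0) U (s, y) := by
    intro s y h
    have := (slice_t (dU _ h)).deriv
    rw [← this, hUdef]
  have fUx : ∀ s y, (s, y) ∈ Ω →
      deriv (fun y' => q s y' / ρ s y') y = dir (0, 1) U (s, y) := by
    intro s y h
    have := (slice_x (dU _ h)).deriv
    rw [← this, hUdef]
  have gtt : deriv (fun s => deriv (fun s' => q s' x / ρ s' x) s) t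
      = dir (1, 0) (dir (1, 0) U) (t, x) :=
    (ut_t.congr_of_eventuallyEq (nt.mono fun s hs => fUt s x hs)).deriv
  have gtx : deriv (fun s => deriv (fun y => q s y / ρ s y) x) t
      = dir (1, 0) (dir (0, 1) U) (t, x) :=
    (ux_t.congr_of_eventuallyEq (nt.mono fun s hs => fUx s x hs)).deriv
  have gxx : deriv (fun y => deriv (fun y' => q t y' / ρ t y') y) x
      = dir (0, 1) (dir (0, 1) U) (t, x) :=
    (ux_x.congr_of_eventuallyEq (nx.mono fun y hy => fUx t y hy)).deriv
  have eU : q t x / ρ t x = U (t, x) := by rw [hUdef]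
  dsimp only
  rw [gtt, gtx, gxx, fUt t x hp, fUx t x hp, eU]
  unfold Ftilde
  rw [sU] at momx
  rw [sL] at massx
  linear_combination momt - a ^ 2 * massx + U (t, x) * momx + dir (0, 1) U (t, x) * mom
end

section
/- Let a>0 and k>0 with k·a > 1, and let υ > k². For z∈ℝ with z² < a² define b₁₁(z) = 1 + 2·z·k − (1 + 2·z·k)²/(k²·(a² − z²)) and the symmetric 2×2 matrix B̃₃(z) with entries B̃₃(z)₁₁ = b₁₁(z), B̃₃(z)₁₂ = B̃₃(z)₂₁ = (1 + 2·z·k)/(k·(a² − z²)) − k, and B̃₃(z)₂₂ = υ − 1/(a² − z²). Then there exists ε₁ > 0 such that for every z∈ℝ with |z| ≤ 2·ε₁ the matrix B̃₃(z) is positive definite. -/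
/-!
At `z = 0`, write `p = 1 - 1 / (k a)²`, which is positive since `k a > 1`. The matrix is then
`!![p, -k p; -k p, υ - 1 / a²]`, with leading entry `p > 0` and determinant
`p (υ - 1 / a² - k² p) = p (υ - k²) > 0`. Both leading minors are continuous in `z` near `0`,
because `a² - z²` stays away from `0`, so they remain positive on an interval around `0`, and
Sylvester's criterion for `2 × 2` matrices (`posDef_two_of_minors`) applies there.
-/

/-- The matrix `B̃₃(z)` from the boundary term estimate at `x = 0`. -/
noncomputable def Btilde3 (a k υ z : ℝ) : Matrix (Fin 2) (Fin 2) ℝ :=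
  !![1 + 2 * z * k - (1 + 2 * z * k) ^ 2 / (k ^ 2 * (a ^ 2 - z ^ 2)),
      (1 + 2 * z * k) / (k * (a ^ 2 - z ^ 2)) - k;
      (1 + 2 * z * k) / (k * (a ^ 2 - z ^ 2)) - k,
      υ - 1 / (a ^ 2 - z ^ 2)]

/-- Sylvester's criterion for real symmetric `2 × 2` matrices, by completing the square:
`p (p x² + 2 q x y + r y²) = (p x + q y)² + (p r - q²) y²`. -/
theorem posDef_two_of_minors {p q r : ℝ} (hp : 0 < p) (hdet : 0 < p * r - q ^ 2) :
    (!![p, q; q, r] : Matrix (Fin 2) (Fin 2) ℝ).PosDef := by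
  refine Matrix.PosDef.of_dotProduct_mulVec_pos ?_ ?_
  · ext i j
    fin_cases i <;> fin_cases j <;> simp
  · intro x hx
    have key : 0 < p * (x 0 * (p * x 0 + q * x 1) + x 1 * (q * x 0 + r * x 1)) := by
      have e : p * (x 0 * (p * x 0 + q * x 1) + x 1 * (q * x 0 + r * x 1))
          = (p * x 0 + q * x 1) ^ 2 + (p * r - q ^ 2) * x 1 ^ 2 := by ring
      rw [e]
      by_cases h1 : x 1 = 0
      · have h0 : x 0 ≠ 0 := by
          intro h0
          apply hx
          ext i
          fin_cases i <;> simp [h0, h1]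
        rw [h1]
        have : p * x 0 ≠ 0 := mul_ne_zero hp.ne' h0
        simp only [mul_zero, add_zero, ne_eq, OfNat.ofNat_ne_zero, not_false_eq_true, zero_pow]
        positivity
      · positivity
    have := pos_of_mul_pos_right key hp.le
    simpa [dotProduct, Matrix.mulVec, Fin.sum_univ_two] using this

/-- If `k a > 1` and `υ > k²` then the matrix `B̃₃(z)` is positive
definite for all `z` with `|z| ≤ 2 ε₁`, for some `ε₁ > 0`. -/
theorem Btilde3_posDef_near_zero
    (a k υ : ℝ) (ha : 0 < a) (hk : 0 < k) (hka : 1 < k * a) (hυ : k ^ 2 < υ) :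
    ∃ ε₁ > (0 : ℝ), ∀ z : ℝ, |z| ≤ 2 * ε₁ → (Btilde3 a k υ z).PosDef := by
  have hD : a ^ 2 - (0 : ℝ) ^ 2 ≠ 0 := by simp [ha.ne']
  have hkD : k * (a ^ 2 - (0 : ℝ) ^ 2) ≠ 0 := mul_ne_zero hk.ne' hD
  have hk2D : k ^ 2 * (a ^ 2 - (0 : ℝ) ^ 2) ≠ 0 := mul_ne_zero (pow_ne_zero 2 hk.ne') hD
  have cp : ContinuousAt (fun z : ℝ =>
      1 + 2 * z * k - (1 + 2 * z * k) ^ 2 / (k ^ 2 * (a ^ 2 - z ^ 2))) 0 := by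
    fun_prop (disch := assumption)
  have cq : ContinuousAt (fun z : ℝ =>
      (1 + 2 * z * k) / (k * (a ^ 2 - z ^ 2)) - k) 0 := by
    fun_prop (disch := assumption)
  have cr : ContinuousAt (fun z : ℝ => υ - 1 / (a ^ 2 - z ^ 2)) 0 := by
    fun_prop (disch := assumption)
  have hp : 0 < 1 - 1 / (k ^ 2 * a ^ 2) := by
    rw [sub_pos, div_lt_one (by positivity)]
    nlinarith
  have hp0 := cp.eventually (lt_mem_nhds (a := 0) (by simpa using hp))
  have hdet0 := ((cp.mul cr).sub (cq.pow 2)).eventually (lt_mem_nhds (a := 0) (by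
    have h := mul_pos hp (sub_pos.mpr hυ)
    convert h using 1
    simp only [Pi.mul_apply, Pi.sub_apply, Pi.pow_apply]
    field_simp
    ring))
  obtain ⟨δ, hδ, h⟩ := Metric.eventually_nhds_iff.mp (hp0.and hdet0)
  -- The closed interval of radius `2 ε₁ = 2 δ / 3` lies in the open ball of radius `δ`.
  refine ⟨δ / 3, by positivity, fun z hz => ?_⟩
  obtain ⟨h1, h2⟩ := h (y := z) (by rw [Real.dist_eq, sub_zero]; linarith)
  exact posDef_two_of_minors h1 h2
end

section
/- Let a>0, L>0, k>0 and let ū:[0,L]→ℝ be continuous with 0 < ū(x) < a for all x, and suppose exp(−x/L) < k·(a − ū(x)) for all x∈[0,L]. With h₁(x)=k, h₂(x)=exp(−x/L), define for x∈[0,L] and v₀∈ℝ the function k₁(x,v₀) = h₁(x)·(a² − (ū(x)+v₀)²) − 2·h₂(x)·(ū(x)+v₀). Then there exists ε₂ > 0 such that K₁ := min over x∈[0,L] and |v₀| ≤ ε₂ of ( k₁(x,v₀) − h₂(x)²/h₁(x) ) is strictly positive, and K̃₁ := min over x∈[0,L] and |v₀| ≤ ε₂ of ( h₁(x)·k₁(x,v₀)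 − h₂(x)² )/k₁(x,v₀) is strictly positive (in particular k₁(x,v₀) > h₂(x)²/h₁(x) > 0 for all such (x,v₀)). -/
/-!
With `w = ū(x) + v₀`, `h = exp(-x/L)` and `k₁ = k (a² - w²) - 2 h w`, completing the square gives
`k (k₁ - h²/k) = (k a)² - (k w + h)² = (k a - k w - h) (k a + k w + h)`.
By compactness `k (a - ū) - h` has a positive minimum `δ` on `[0, L]`, and `|v₀| ≤ δ / (2 k)` moves
each factor by at most `δ / 2 ≤ k a / 2`. Hence the first factor is at least `δ / 2` and the second
at least `k a / 2`, so `k₁ - h²/k ≥ δ a / 4`. The quotient `(k k₁ - h²) / k₁` is then bounded below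
because `k₁ ≤ k a² + h²/k ≤ 2 k a²`.
-/

/-- Existence of the constants `K₁ > 0` and `K̃₁ > 0` of Lemma
`normlemma`: with `h₁(x) = k`, `h₂(x) = exp(-x/L)` and
`k₁(x, v₀) = h₁(x)(a² - (ū(x)+v₀)²) - 2 h₂(x)(ū(x)+v₀)`, if `h₂ < k (a - ū)` on `[0, L]`,
then for some `ε₂ > 0` the quantities `k₁ - h₂²/h₁` and `(h₁ k₁ - h₂²)/k₁` have positive
lower bounds `K₁`, `K̃₁` uniformly over `x ∈ [0, L]` and `|v₀| ≤ ε₂`; in particular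
`k₁(x, v₀) > h₂(x)²/h₁(x) > 0` for all such `(x, v₀)`. -/
theorem existence_of_K1_Ktilde1
    (a L k : ℝ) (ha : 0 < a) (hL : 0 < L) (hk : 0 < k)
    (ubar : ℝ → ℝ) (hucont : ContinuousOn ubar (Set.Icc (0 : ℝ) L))
    (hsub : ∀ x ∈ Set.Icc (0 : ℝ) L, ubar x ∈ Set.Ioo 0 a)
    (hw : ∀ x ∈ Set.Icc (0 : ℝ) L, Real.exp (-x / L) < k * (a - ubar x)) :
    ∃ ε₂ > (0 : ℝ), ∃ K₁ > (0 : ℝ), ∃ Ktilde₁ > (0 : ℝ),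
      ∀ x ∈ Set.Icc (0 : ℝ) L, ∀ v₀ : ℝ, |v₀| ≤ ε₂ →
        0 < (Real.exp (-x / L)) ^ 2 / k ∧
        (Real.exp (-x / L)) ^ 2 / k <
          k * (a ^ 2 - (ubar x + v₀) ^ 2) - 2 * Real.exp (-x / L) * (ubar x + v₀) ∧
        K₁ ≤ (k * (a ^ 2 - (ubar x + v₀) ^ 2) - 2 * Real.exp (-x / L) * (ubar x + v₀)) -
              (Real.exp (-x / L)) ^ 2 / k ∧
        Ktilde₁ ≤
          (k * (k * (a ^ 2 - (ubar x + v₀) ^ 2) - 2 * Real.exp (-x / L) * (ubar x + v₀)) -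
              (Real.exp (-x / L)) ^ 2) /
            (k * (a ^ 2 - (ubar x + v₀) ^ 2) - 2 * Real.exp (-x / L) * (ubar x + v₀)) := by
  obtain ⟨x₀, hx₀, hmin⟩ := (isCompact_Icc (a := (0 : ℝ)) (b := L)).exists_isMinOn
    (Set.nonempty_Icc.2 hL.le)
    (f := fun x => k * (a - ubar x) - Real.exp (-x / L)) (by fun_prop)
  obtain ⟨δ, hδ⟩ : ∃ δ, δ = k * (a - ubar x₀) - Real.exp (-x₀ / L) := ⟨_, rfl⟩
  have hδpos : 0 < δ := by linarith [hw x₀ hx₀]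
  have hδa : δ ≤ k * a := by
    linarith [mul_pos hk (hsub x₀ hx₀).1, Real.exp_pos (-x₀ / L)]
  refine ⟨δ / (2 * k), by positivity, δ * a / 4, by positivity, δ / (8 * a), by positivity, ?_⟩
  intro x hx v₀ hv
  have hmx : δ ≤ k * (a - ubar x) - Real.exp (-x / L) := hδ.le.trans (hmin hx)
  have hu := (hsub x hx).1
  have hpos := Real.exp_pos (-x / L)
  generalize Real.exp (-x / L) = h at *
  generalize ubar x = u at *
  have hku : 0 < k * u := mul_pos hk hu
  have hkv : |k * v₀| ≤ δ / 2 := by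
    rw [abs_mul, abs_of_pos hk]
    calc k * |v₀| ≤ k * (δ / (2 * k)) := by gcongr
      _ = δ / 2 := by field_simp
  obtain ⟨hv1, hv2⟩ := abs_le.1 hkv
  obtain ⟨K, hK⟩ : ∃ K, K = k * (a ^ 2 - (u + v₀) ^ 2) - 2 * h * (u + v₀) := ⟨_, rfl⟩
  rw [← hK]
  have hfac : k * K - h ^ 2 = (k * a - k * (u + v₀) - h) * (k * a + k * (u + v₀) + h) := by
    rw [hK]; ring
  have hprod : δ / 2 * (k * a / 2) ≤ k * K - h ^ 2 := by
    rw [hfac]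
    apply mul_le_mul <;> nlinarith
  have hdiff : K - h ^ 2 / k = (k * K - h ^ 2) / k := by field_simp
  have hK₁ : δ * a / 4 ≤ K - h ^ 2 / k := by
    rw [hdiff, le_div_iff₀ hk]
    linarith
  have hK₁pos : 0 < δ * a / 4 := by positivity
  have hsq : 0 < h ^ 2 / k := by positivity
  refine ⟨hsq, by linarith, hK₁, ?_⟩
  have hKpos : 0 < K := by linarith
  have hKle : K ≤ 2 * k * a ^ 2 := by
    have hle : h ≤ k * a := by nlinarith
    have hh : h ^ 2 ≤ (k * a) ^ 2 := by gcongr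
    have hexp : k * K = (k * a) ^ 2 + h ^ 2 - (k * (u + v₀) + h) ^ 2 := by rw [hK]; ring
    refine le_of_mul_le_mul_left ?_ hk
    nlinarith [sq_nonneg (k * (u + v₀) + h)]
  rw [le_div_iff₀ hKpos]
  calc δ / (8 * a) * K ≤ δ / (8 * a) * (2 * k * a ^ 2) := by gcongr
    _ = δ / 2 * (k * a / 2) := by field_simp; norm_num
    _ ≤ _ := hprod
end

section
/- Let a>0, h₁>0, h₂>0 and let w∈ℝ with w ≥ 0 (representing ū+v₀). Set k₁ = h₁·(a² − w²) − 2·h₂·w and assume h₂² < h₁·k₁. Then for all real v₁, v₂ the quantity χ = h₁·( (a² − w²)·v₁² + v₂² ) − 2·h₂·( w·v₁² + v₁·v₂ ) satisfies the three inequalities: (i) χ ≥ ( k₁ − h₂²/h₁ )·v₁²; (ii) χ ≥ ( (h₁·k₁ − h₂²)/k₁ )·v₂²; and (iii) χ ≤ 2·h₁·(a² − w²)·v₁² + 2·h₁·v₂². -/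
/-!
In terms of `k₁`, the integrand is the quadratic form
`χ = k₁ v₁² - 2 h₂ v₁ v₂ + h₁ v₂²`. Since `h₁ > 0` and `h₁ k₁ > h₂² ≥ 0`, also `k₁ > 0`.
The two lower bounds come from completing the square in `v₂` and in `v₁` respectively.
For the upper bound, right-hand side minus `χ` equals
`4 h₂ w v₁² + (k₁ v₁² + 2 h₂ v₁ v₂ + h₁ v₂²)`, and the form in parentheses is
nonnegative: it is `χ` at `(v₁, -v₂)`, to which the first lower bound applies.
-/

/-- Pointwise bounds for the Lyapunov integrand `χ`: with
`k₁ = h₁(a² - w²) - 2 h₂ w` and `h₂² < h₁ k₁`, for all `v₁, v₂` one has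
`χ ≥ (k₁ - h₂²/h₁) v₁²`, `χ ≥ ((h₁ k₁ - h₂²)/k₁) v₂²` and
`χ ≤ 2 h₁ (a² - w²) v₁² + 2 h₁ v₂²`. -/
theorem lyapunov_integrand_bounds
    (a h₁ h₂ w k₁ : ℝ) (ha : 0 < a) (hh₁ : 0 < h₁) (hh₂ : 0 < h₂) (hw : 0 ≤ w)
    (hk₁ : k₁ = h₁ * (a ^ 2 - w ^ 2) - 2 * h₂ * w)
    (hlt : h₂ ^ 2 < h₁ * k₁) (v₁ v₂ : ℝ) :
    (k₁ - h₂ ^ 2 / h₁) * v₁ ^ 2 ≤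
        h₁ * ((a ^ 2 - w ^ 2) * v₁ ^ 2 + v₂ ^ 2) - 2 * h₂ * (w * v₁ ^ 2 + v₁ * v₂) ∧
      ((h₁ * k₁ - h₂ ^ 2) / k₁) * v₂ ^ 2 ≤
        h₁ * ((a ^ 2 - w ^ 2) * v₁ ^ 2 + v₂ ^ 2) - 2 * h₂ * (w * v₁ ^ 2 + v₁ * v₂) ∧
      h₁ * ((a ^ 2 - w ^ 2) * v₁ ^ 2 + v₂ ^ 2) - 2 * h₂ * (w * v₁ ^ 2 + v₁ * v₂) ≤
        2 * h₁ * (a ^ 2 - w ^ 2) * v₁ ^ 2 + 2 * h₁ * v₂ ^ 2 := by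
  have hk : 0 < k₁ := pos_of_mul_pos_right (lt_of_le_of_lt (sq_nonneg h₂) hlt) hh₁.le
  have hχ : h₁ * ((a ^ 2 - w ^ 2) * v₁ ^ 2 + v₂ ^ 2) - 2 * h₂ * (w * v₁ ^ 2 + v₁ * v₂)
      = k₁ * v₁ ^ 2 - 2 * h₂ * (v₁ * v₂) + h₁ * v₂ ^ 2 := by
    rw [hk₁]; ring
  have square_v₂ (y : ℝ) : k₁ * v₁ ^ 2 - 2 * h₂ * (v₁ * y) + h₁ * y ^ 2
      = (k₁ - h₂ ^ 2 / h₁) * v₁ ^ 2 + h₁ * (y - h₂ / h₁ * v₁) ^ 2 := by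
    field_simp; ring
  have square_v₁ : k₁ * v₁ ^ 2 - 2 * h₂ * (v₁ * v₂) + h₁ * v₂ ^ 2
      = (h₁ * k₁ - h₂ ^ 2) / k₁ * v₂ ^ 2 + k₁ * (v₁ - h₂ / k₁ * v₂) ^ 2 := by
    clear hχ square_v₂ hk₁
    field_simp; ring
  refine ⟨?_, ?_, ?_⟩
  · rw [hχ, square_v₂]
    exact le_add_of_nonneg_right (by positivity)
  · rw [hχ, square_v₁]
    exact le_add_of_nonneg_right (by positivity)
  · have hcoef : 0 ≤ k₁ - h₂ ^ 2 / h₁ := by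
      rw [sub_nonneg, div_le_iff₀ hh₁]
      linarith
    have hform : 0 ≤ k₁ * v₁ ^ 2 - 2 * h₂ * (v₁ * -v₂) + h₁ * (-v₂) ^ 2 := by
      rw [square_v₂]
      positivity
    have hw' : 0 ≤ 4 * h₂ * w * v₁ ^ 2 := by positivity
    rw [hk₁] at hform
    linarith
end

section
/- Let a>0, L>0, k>0, T>0, let ū∈C¹([0,L]) and u∈C²([0,T]×[0,L]). With h₁(x)=k, h₂(x)=exp(−x/L), k₁(x,v₀) = h₁(x)(a²−(ū(x)+v₀)²) − 2h₂(x)(ū(x)+v₀), suppose there are ε₂>0, K₁>0, K̃₁>0 with |u(t,x)| ≤ ε₂ and ū(x)+u(t,x) ≥ 0 for all (t,x), and k₁(x,v₀) − h₂(x)²/h₁(x) ≥ K₁ > 0 and (h₁(x)k₁(x,v₀) − h₂(x)²)/k₁(x,v₀) ≥ K̃₁ > 0 whenever |v₀| ≤ ε₂. Define E₁(t) = ∫₀ᴸ h₁·((a²−(ū+u)²)u_x² + u_t²) − 2h₂·((ū+u)u_x² + u_t u_x) dx, E₂(t) = ∫₀ᴸ h₁·((a²−(ū+u)²)u_xx²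 + u_tx²) − 2h₂·((ū+u)u_xx² + u_tx u_xx) dx and E(t)=E₁(t)+E₂(t). Then for all t∈[0,T]: K_min·∫₀ᴸ (u_x² + u_t² + u_tx² + u_xx²) dx ≤ E(t) ≤ K_max·∫₀ᴸ (u² + u_x² + u_t² + u_tx² + u_xx²) dx, where K_min = (1/2)·min{K₁, K̃₁} and K_max = max{ 2k, max over x∈[0,L], |v₀|≤ε₂ of ( k₁(x,v₀) + h₂(x)²/h₁(x) ) }. -/
/-! With `w = ū + u`, `h = h₂(x)` and `k₁ = k (a² - w²) - 2 h w`, both integrands are values of the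
quadratic form `k₁ p² - 2 h p q + k q²`, at `(p, q) = (uₓ, uₜ)` and `(p, q) = (uₓₓ, uₜₓ)`.
Completing the square in `q` bounds the form below by `(k₁ - h²/k) p² ≥ K₁ p²`, completing it in `p`
bounds it below by `(k - h²/k₁) q² ≥ K̃₁ q²`, and the average of the two is the lower estimate
(`form_lower`). Young's inequality `-2 h p q ≤ (h²/k) p² + k q²` is the upper estimate
(`form_upper`). All integrands are continuous on `[0, L]`, so the pointwise bounds integrate. The
supremum in `K_max` is over a set bounded above by `k a² + 2/k` (`coeff_le`). -/

/-- First-order part `E₁` of the `H²`-Lyapunov function, with weights `h₁ = k`,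
`h₂(x) = exp(-x/L)`. -/
noncomputable def E1fun (a L k : ℝ) (ubar : ℝ → ℝ) (u ux ut : ℝ → ℝ → ℝ) (t : ℝ) : ℝ :=
  ∫ x in (0 : ℝ)..L,
    (k * ((a ^ 2 - (ubar x + u t x) ^ 2) * (ux t x) ^ 2 + (ut t x) ^ 2) -
      2 * Real.exp (-x / L) *
        ((ubar x + u t x) * (ux t x) ^ 2 + ut t x * ux t x))

/-- Second-order part `E₂` of the `H²`-Lyapunov function. -/
noncomputable def E2fun (a L k : ℝ) (ubar : ℝ → ℝ) (u uxx utx : ℝ → ℝ → ℝ) (t : ℝ) : ℝ :=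
  ∫ x in (0 : ℝ)..L,
    (k * ((a ^ 2 - (ubar x + u t x) ^ 2) * (uxx t x) ^ 2 + (utx t x) ^ 2) -
      2 * Real.exp (-x / L) *
        ((ubar x + u t x) * (uxx t x) ^ 2 + utx t x * uxx t x))

theorem form_lower {k c h A B p q : ℝ} (hk : 0 < k) (hA0 : 0 < A)
    (hA : A ≤ c - h ^ 2 / k) (hB : B ≤ (k * c - h ^ 2) / c) :
    1 / 2 * min A B * (p ^ 2 + q ^ 2) ≤ c * p ^ 2 - 2 * h * (p * q) + k * q ^ 2 := by
  have hc : 0 < c := by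
    have : 0 ≤ h ^ 2 / k := by positivity
    linarith
  have e1 : c * p ^ 2 - 2 * h * (p * q) + k * q ^ 2
      = (c - h ^ 2 / k) * p ^ 2 + k * (q - h * p / k) ^ 2 := by
    field_simp
    ring
  have e2 : c * p ^ 2 - 2 * h * (p * q) + k * q ^ 2
      = (k * c - h ^ 2) / c * q ^ 2 + c * (p - h * q / c) ^ 2 := by
    field_simp
    ring
  have l1 : min A B * p ^ 2 ≤ (c - h ^ 2 / k) * p ^ 2 :=
    mul_le_mul_of_nonneg_right ((min_le_left _ _).trans hA) (sq_nonneg p)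
  have l2 : min A B * q ^ 2 ≤ (k * c - h ^ 2) / c * q ^ 2 :=
    mul_le_mul_of_nonneg_right ((min_le_right _ _).trans hB) (sq_nonneg q)
  have s1 : 0 ≤ k * (q - h * p / k) ^ 2 := by positivity
  have s2 : 0 ≤ c * (p - h * q / c) ^ 2 := by positivity
  linarith

theorem form_upper {k c h M p q : ℝ} (hk : 0 < k) (hM : 2 * k ≤ M) (hM' : c + h ^ 2 / k ≤ M) :
    c * p ^ 2 - 2 * h * (p * q) + k * q ^ 2 ≤ M * (p ^ 2 + q ^ 2) := by
  have e : (c + h ^ 2 / k) * p ^ 2 + 2 * k * q ^ 2 - (c * p ^ 2 - 2 * h * (p * q) + k * q ^ 2)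
      = k * (q + h * p / k) ^ 2 := by
    field_simp
    ring
  have s : 0 ≤ k * (q + h * p / k) ^ 2 := by positivity
  have l1 := mul_le_mul_of_nonneg_right hM' (sq_nonneg p)
  have l2 := mul_le_mul_of_nonneg_right hM (sq_nonneg q)
  linarith

/-- The bound is uniform in `w` because `-k w² - 2 h w ≤ h²/k`. -/
theorem coeff_le {a k h w : ℝ} (hk : 0 < k) (h0 : 0 ≤ h) (h1 : h ≤ 1) :
    k * (a ^ 2 - w ^ 2) - 2 * h * w + h ^ 2 / k ≤ k * a ^ 2 + 2 / k := by
  have e : k * a ^ 2 + 2 * h ^ 2 / k - (k * (a ^ 2 - w ^ 2) - 2 * h * w + h ^ 2 / k)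
      = k * (w + h / k) ^ 2 := by
    field_simp
    ring
  have s : 0 ≤ k * (w + h / k) ^ 2 := by positivity
  have l : 2 * h ^ 2 / k ≤ 2 / k := by
    gcongr
    nlinarith
  linarith

/-- Equivalence of the `H²`-Lyapunov function `E = E₁ + E₂` with the
squared `H²`-norm: `K_min ∫ (uₓ² + uₜ² + uₜₓ² + uₓₓ²) ≤ E(t) ≤
K_max ∫ (u² + uₓ² + uₜ² + uₜₓ² + uₓₓ²)` with `K_min = (1/2) min {K₁, K̃₁}` and
`K_max = max {2k, max_{x, |v₀| ≤ ε₂} (k₁(x,v₀) + h₂(x)²/h₁(x))}`. -/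
theorem lyapunov_equivalent_to_H2_norm
    (a L k T ε₂ K₁ Ktilde₁ : ℝ)
    (ha : 0 < a) (hL : 0 < L) (hk : 0 < k) (hT : 0 < T) (hε₂ : 0 < ε₂)
    (hK₁ : 0 < K₁) (hKt₁ : 0 < Ktilde₁)
    (ubar ubar' : ℝ → ℝ)
    (hubar : ∀ x ∈ Set.Icc (0 : ℝ) L, HasDerivAt ubar (ubar' x) x)
    (hubarc : ContinuousOn ubar (Set.Icc (0 : ℝ) L))
    (u ux ut uxx utx : ℝ → ℝ → ℝ)
    (hux : ∀ t ∈ Set.Icc (0 : ℝ) T, ∀ x ∈ Set.Icc (0 : ℝ) L,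
      HasDerivAt (fun y => u t y) (ux t x) x)
    (hut : ∀ t ∈ Set.Icc (0 : ℝ) T, ∀ x ∈ Set.Icc (0 : ℝ) L,
      HasDerivAt (fun s => u s x) (ut t x) t)
    (huxx : ∀ t ∈ Set.Icc (0 : ℝ) T, ∀ x ∈ Set.Icc (0 : ℝ) L,
      HasDerivAt (fun y => ux t y) (uxx t x) x)
    (hutx : ∀ t ∈ Set.Icc (0 : ℝ) T, ∀ x ∈ Set.Icc (0 : ℝ) L,
      HasDerivAt (fun y => ut t y) (utx t x) x)
    (hucont : ∀ t ∈ Set.Icc (0 : ℝ) T, ContinuousOn (fun x => u t x) (Set.Icc (0 : ℝ) L))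
    (huxcont : ∀ t ∈ Set.Icc (0 : ℝ) T, ContinuousOn (fun x => ux t x) (Set.Icc (0 : ℝ) L))
    (hutcont : ∀ t ∈ Set.Icc (0 : ℝ) T, ContinuousOn (fun x => ut t x) (Set.Icc (0 : ℝ) L))
    (huxxcont : ∀ t ∈ Set.Icc (0 : ℝ) T, ContinuousOn (fun x => uxx t x) (Set.Icc (0 : ℝ) L))
    (hutxcont : ∀ t ∈ Set.Icc (0 : ℝ) T, ContinuousOn (fun x => utx t x) (Set.Icc (0 : ℝ) L))
    (hsmall : ∀ t ∈ Set.Icc (0 : ℝ) T, ∀ x ∈ Set.Icc (0 : ℝ) L,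
      |u t x| ≤ ε₂ ∧ 0 ≤ ubar x + u t x)
    (hKbound : ∀ x ∈ Set.Icc (0 : ℝ) L, ∀ v₀ : ℝ, |v₀| ≤ ε₂ →
      K₁ ≤ (k * (a ^ 2 - (ubar x + v₀) ^ 2) - 2 * Real.exp (-x / L) * (ubar x + v₀)) -
            (Real.exp (-x / L)) ^ 2 / k ∧
      Ktilde₁ ≤
        (k * (k * (a ^ 2 - (ubar x + v₀) ^ 2) - 2 * Real.exp (-x / L) * (ubar x + v₀)) -
            (Real.exp (-x / L)) ^ 2) /
          (k * (a ^ 2 - (ubar x + v₀) ^ 2) - 2 * Real.exp (-x / L) * (ubar x + v₀))) :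
    ∀ t ∈ Set.Icc (0 : ℝ) T,
      (1 / 2 * min K₁ Ktilde₁) *
          (∫ x in (0 : ℝ)..L,
            ((ux t x) ^ 2 + (ut t x) ^ 2 + (utx t x) ^ 2 + (uxx t x) ^ 2)) ≤
        E1fun a L k ubar u ux ut t + E2fun a L k ubar u uxx utx t ∧
      E1fun a L k ubar u ux ut t + E2fun a L k ubar u uxx utx t ≤
        (max (2 * k)
            (sSup {y : ℝ | ∃ x ∈ Set.Icc (0 : ℝ) L, ∃ v₀ ∈ Set.Icc (-ε₂) ε₂,
              y = (k * (a ^ 2 - (ubar x + v₀) ^ 2) -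
                    2 * Real.exp (-x / L) * (ubar x + v₀)) +
                  (Real.exp (-x / L)) ^ 2 / k})) *
          (∫ x in (0 : ℝ)..L,
            ((u t x) ^ 2 + (ux t x) ^ 2 + (ut t x) ^ 2 + (utx t x) ^ 2 + (uxx t x) ^ 2)) := by
  intro t ht
  have iu := hucont t ht
  have iux := huxcont t ht
  have iut := hutcont t ht
  have iuxx := huxxcont t ht
  have iutx := hutxcont t ht
  have hexp : ContinuousOn (fun x : ℝ => Real.exp (-x / L)) (Set.Icc 0 L) := by fun_prop
  have hInt : ∀ {f : ℝ → ℝ}, ContinuousOn f (Set.Icc 0 L) →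
      IntervalIntegrable f MeasureTheory.volume 0 L := fun hf =>
    ContinuousOn.intervalIntegrable (by rwa [Set.uIcc_of_le hL.le])
  unfold E1fun E2fun
  rw [← intervalIntegral.integral_add (hInt (by fun_prop)) (hInt (by fun_prop)),
    ← intervalIntegral.integral_const_mul, ← intervalIntegral.integral_const_mul]
  constructor
  · refine intervalIntegral.integral_mono_on hL.le (hInt (by fun_prop)) (hInt (by fun_prop)) ?_
    intro x hx
    obtain ⟨hA, hB⟩ := hKbound x hx (u t x) (hsmall t ht x hx).1
    have b1 := form_lower (p := ux t x) (q := ut t x) hk hK₁ hA hB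
    have b2 := form_lower (p := uxx t x) (q := utx t x) hk hK₁ hA hB
    linarith
  · refine intervalIntegral.integral_mono_on hL.le (hInt (by fun_prop)) (hInt (by fun_prop)) ?_
    intro x hx
    set S : Set ℝ := {y : ℝ | ∃ x ∈ Set.Icc (0 : ℝ) L, ∃ v₀ ∈ Set.Icc (-ε₂) ε₂,
      y = (k * (a ^ 2 - (ubar x + v₀) ^ 2) - 2 * Real.exp (-x / L) * (ubar x + v₀)) +
        (Real.exp (-x / L)) ^ 2 / k} with hS
    have hbdd : BddAbove S := by
      refine ⟨k * a ^ 2 + 2 / k, ?_⟩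
      rintro y ⟨z, hz, v, -, rfl⟩
      have hz' : -z / L ≤ 0 := div_nonpos_of_nonpos_of_nonneg (by linarith [hz.1]) hL.le
      exact coeff_le hk (Real.exp_pos _).le (Real.exp_le_one_iff.2 hz')
    have hmem := le_csSup hbdd
      (show _ ∈ S from ⟨x, hx, u t x, abs_le.1 (hsmall t ht x hx).1, rfl⟩)
    have hM := le_max_left (2 * k) (sSup S)
    have hM' := hmem.trans (le_max_right (2 * k) (sSup S))
    have b1 := form_upper (p := ux t x) (q := ut t x) hk hM hM'
    have b2 := form_upper (p := uxx t x) (q := utx t x) hk hM hM'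
    have b3 : 0 ≤ max (2 * k) (sSup S) * (u t x) ^ 2 :=
      mul_nonneg (by linarith) (sq_nonneg _)
    linarith
end

section
/- Let a>0, L>0, k>0, T>0, let ū∈C¹([0,L]) and let u∈C²([0,T]×[0,L]). With h₁(x)=k and h₂(x)=exp(−x/L), define F(t,x) := u_tt + 2(ū+u)u_tx − (a²−(ū+u)²)u_xx, and define E₁(t) = ∫₀ᴸ h₁·((a²−(ū+u)²)·u_x² + u_t²) − 2h₂·((ū+u)·u_x² + u_t·u_x) dx. Then E₁ is differentiable on [0,T] and d/dt E₁(t) = I₁ + I₂ + I₃, where I₁ = ∫₀ᴸ h₂'(x)·( (a²−(ū+u)²)·u_x² + u_t² ) dx (with h₂'(x) = −(1/L)·exp(−x/L)); I₂ = ∫₀ᴸ [ 2h₁(ū'+u_x)u_t² − 2h₁(ū+u)u_t u_x² + 4h₁(ū+u)(ū'+u_x)u_x u_t + 2h₁ F u_t − 2h₂ u_t u_x² − 2h₂(ū+u)(ū'+u_x)u_x² − 2h₂ F u_x ] dx; and I₃ is the boundary term [ (a²−(ū+u)²)·(2h₁ u_x u_t − h₂ u_x²) − (2h₁(ū+u)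 + h₂)·u_t² ] evaluated at x=L minus the same expression evaluated at x=0. -/
/-- The residual `F = u_tt + 2(ū+u) u_tx - (a² - (ū+u)²) u_xx`. -/
noncomputable def Fres (a : ℝ) (ubar : ℝ → ℝ) (u utt utx uxx : ℝ → ℝ → ℝ) (t x : ℝ) : ℝ :=
  utt t x + 2 * (ubar x + u t x) * utx t x - (a ^ 2 - (ubar x + u t x) ^ 2) * uxx t x

/-- The boundary integrand of `I₃`:
`(a² - (ū+u)²)(2 h₁ uₓ uₜ - h₂ uₓ²) - (2 h₁ (ū+u) + h₂) uₜ²`. -/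
noncomputable def bdryTerm1 (a L k : ℝ) (ubar : ℝ → ℝ) (u ux ut : ℝ → ℝ → ℝ)
    (t x : ℝ) : ℝ :=
  (a ^ 2 - (ubar x + u t x) ^ 2) *
      (2 * k * ux t x * ut t x - Real.exp (-x / L) * (ux t x) ^ 2) -
    (2 * k * (ubar x + u t x) + Real.exp (-x / L)) * (ut t x) ^ 2

/-- Leibniz rule on a compact interval, with joint continuity of the integrand and of its
`t`-derivative; the dominating function is the maximum of the derivative on
`[t - 1, t + 1] × [b, c]`. -/
theorem hasDerivAt_integral_of_continuous_deriv (G G' : ℝ → ℝ → ℝ) (b c t : ℝ)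
    (hG : Continuous fun p : ℝ × ℝ => G p.1 p.2)
    (hG' : Continuous fun p : ℝ × ℝ => G' p.1 p.2)
    (hd : ∀ s x, HasDerivAt (fun r => G r x) (G' s x) s) :
    HasDerivAt (fun s => ∫ x in b..c, G s x) (∫ x in b..c, G' t x) t := by
  have hGs : ∀ s, Continuous (G s) := fun s => hG.comp (Continuous.prodMk_right s)
  have hG's : ∀ s, Continuous (G' s) := fun s => hG'.comp (Continuous.prodMk_right s)
  obtain ⟨C, hC⟩ := ((isCompact_Icc (a := t - 1) (b := t + 1)).prod
    (isCompact_uIcc (a := b) (b := c))).exists_bound_of_continuousOn hG'.continuousOn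
  refine (intervalIntegral.hasDerivAt_integral_of_dominated_loc_of_deriv_le
    (F := G) (F' := G') (bound := fun _ => C) (s := Set.Icc (t - 1) (t + 1))
    (Icc_mem_nhds (by linarith) (by linarith))
    (Filter.Eventually.of_forall fun s => (hGs s).aestronglyMeasurable)
    ((hGs t).intervalIntegrable _ _) (hG's t).aestronglyMeasurable
    (Filter.Eventually.of_forall fun x hx s hs => ?_)
    intervalIntegrable_const
    (Filter.Eventually.of_forall fun x _ s _ => hd s x)).2
  exact hC (s, x) ⟨hs, Set.uIoc_subset_uIcc hx⟩

/-- Time derivative of `E₁`: `d/dt E₁(t) = I₁ + I₂ + I₃`. -/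
theorem time_derivative_of_E1
    (a L k T : ℝ) (ha : 0 < a) (hL : 0 < L) (hk : 0 < k) (hT : 0 < T)
    (ubar ubar' : ℝ → ℝ)
    (hubar : ∀ x, HasDerivAt ubar (ubar' x) x)
    (hubar'c : Continuous ubar')
    (u ux ut uxx utx utt : ℝ → ℝ → ℝ)
    (hux : ∀ t x, HasDerivAt (fun y => u t y) (ux t x) x)
    (hut : ∀ t x, HasDerivAt (fun s => u s x) (ut t x) t)
    (huxx : ∀ t x, HasDerivAt (fun y => ux t y) (uxx t x) x)
    (hutx : ∀ t x, HasDerivAt (fun s => ux s x) (utx t x) t)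
    (hutx' : ∀ t x, HasDerivAt (fun y => ut t y) (utx t x) x)
    (hutt : ∀ t x, HasDerivAt (fun s => ut s x) (utt t x) t)
    (hucont : Continuous fun p : ℝ × ℝ => u p.1 p.2)
    (huxcont : Continuous fun p : ℝ × ℝ => ux p.1 p.2)
    (hutcont : Continuous fun p : ℝ × ℝ => ut p.1 p.2)
    (huxxcont : Continuous fun p : ℝ × ℝ => uxx p.1 p.2)
    (hutxcont : Continuous fun p : ℝ × ℝ => utx p.1 p.2)
    (huttcont : Continuous fun p : ℝ × ℝ => utt p.1 p.2) :
    ∀ t ∈ Set.Icc (0 : ℝ) T,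
      HasDerivAt (E1fun a L k ubar u ux ut)
        ((∫ x in (0 : ℝ)..L,
            (-(1 / L) * Real.exp (-x / L)) *
              ((a ^ 2 - (ubar x + u t x) ^ 2) * (ux t x) ^ 2 + (ut t x) ^ 2)) +
          (∫ x in (0 : ℝ)..L,
            (2 * k * (ubar' x + ux t x) * (ut t x) ^ 2 -
              2 * k * (ubar x + u t x) * ut t x * (ux t x) ^ 2 +
              4 * k * (ubar x + u t x) * (ubar' x + ux t x) * ux t x * ut t x +
              2 * k * Fres a ubar u utt utx uxx t x * ut t x -
              2 * Real.exp (-x / L) * ut t x * (ux t x) ^ 2 -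
              2 * Real.exp (-x / L) * (ubar x + u t x) * (ubar' x + ux t x) * (ux t x) ^ 2 -
              2 * Real.exp (-x / L) * Fres a ubar u utt utx uxx t x * ux t x)) +
          (bdryTerm1 a L k ubar u ux ut t L - bdryTerm1 a L k ubar u ux ut t 0)) t := by
  intro t _
  have hubarc : Continuous ubar :=
    continuous_iff_continuousAt.2 fun x => (hubar x).continuousAt
  have sec : ∀ f : ℝ → ℝ → ℝ, (Continuous fun p : ℝ × ℝ => f p.1 p.2) → Continuous (f t) :=
    fun f hf => hf.comp (Continuous.prodMk_right t)
  have c0 := sec _ hucont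
  have c1 := sec _ huxcont
  have c2 := sec _ hutcont
  have c3 := sec _ huxxcont
  have c4 := sec _ hutxcont
  have c5 := sec _ huttcont
  -- the time derivative of the integrand of `E₁`
  have key := hasDerivAt_integral_of_continuous_deriv
    (fun s x => k * ((a ^ 2 - (ubar x + u s x) ^ 2) * (ux s x) ^ 2 + (ut s x) ^ 2) -
      2 * Real.exp (-x / L) * ((ubar x + u s x) * (ux s x) ^ 2 + ut s x * ux s x))
    (fun s x => k * (-2 * (ubar x + u s x) * ut s x * (ux s x) ^ 2
        + 2 * (a ^ 2 - (ubar x + u s x) ^ 2) * ux s x * utx s x + 2 * ut s x * utt s x) -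
      2 * Real.exp (-x / L) * (ut s x * (ux s x) ^ 2
        + 2 * (ubar x + u s x) * ux s x * utx s x + utt s x * ux s x + ut s x * utx s x))
    0 L t (by fun_prop) (by fun_prop) (by
      intro s x
      have hv := (hut s x).const_add (ubar x)
      have hp := hutx s x
      have hq := hutt s x
      refine (((((hv.pow 2).const_sub (a ^ 2)).mul (hp.pow 2)).add (hq.pow 2)).const_mul k |>.sub
        (((hv.mul (hp.pow 2)).add (hq.mul hp)).const_mul (2 * Real.exp (-x / L)))).congr_deriv ?_
      simp only [Pi.pow_apply]
      push_cast
      ring)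
  -- the space derivative of `bdryTerm1`
  have hB : ∀ x, HasDerivAt (bdryTerm1 a L k ubar u ux ut t)
      ((-2 * (ubar x + u t x) * (ubar' x + ux t x)) *
          (2 * k * ux t x * ut t x - Real.exp (-x / L) * (ux t x) ^ 2) +
        (a ^ 2 - (ubar x + u t x) ^ 2) *
          (2 * k * (uxx t x * ut t x + ux t x * utx t x)
            + (1 / L) * Real.exp (-x / L) * (ux t x) ^ 2
            - 2 * Real.exp (-x / L) * ux t x * uxx t x) -
        (2 * k * (ubar' x + ux t x) - (1 / L) * Real.exp (-x / L)) * (ut t x) ^ 2 -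
        2 * (2 * k * (ubar x + u t x) + Real.exp (-x / L)) * ut t x * utx t x) x := by
    intro x
    have hv := (hubar x).add (hux t x)
    have hp := huxx t x
    have hq := hutx' t x
    have hh : HasDerivAt (fun y : ℝ => Real.exp (-y / L)) (Real.exp (-x / L) * (-1 / L)) x :=
      (((hasDerivAt_id x).neg).div_const L).exp
    refine ((((hv.pow 2).const_sub (a ^ 2)).mul
      (((hp.const_mul (2 * k)).mul hq).sub (hh.mul (hp.pow 2)))).sub
      (((hv.const_mul (2 * k)).add hh).mul (hq.pow 2))).congr_deriv ?_
    simp only [Pi.pow_apply, Pi.add_apply, Pi.mul_apply, Pi.sub_apply]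
    push_cast
    ring
  rw [← intervalIntegral.integral_eq_sub_of_hasDerivAt (fun x _ => hB x)
      (Continuous.intervalIntegrable (by fun_prop) _ _),
    ← intervalIntegral.integral_add (Continuous.intervalIntegrable (by fun_prop) _ _)
      (Continuous.intervalIntegrable (by unfold Fres; fun_prop) _ _),
    ← intervalIntegral.integral_add
      (Continuous.intervalIntegrable (by unfold Fres; fun_prop) _ _)
      (Continuous.intervalIntegrable (by fun_prop) _ _)]
  refine key.congr_deriv (Eq.symm ?_)
  refine intervalIntegral.integral_congr fun x _ => ?_
  simp only [Fres]
  ring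
end

section
/- Let a>0, L>0, k>0, T>0, let ū∈C²([0,L]) and let u∈C³([0,T]×[0,L]). With h₁(x)=k and h₂(x)=exp(−x/L), define F(t,x) := u_tt + 2(ū+u)u_tx − (a²−(ū+u)²)u_xx and F_x := ∂_x F, and define E₂(t) = ∫₀ᴸ h₁·((a²−(ū+u)²)·u_xx² + u_tx²) − 2h₂·((ū+u)·u_xx² + u_tx·u_xx) dx. Then E₂ is differentiable on [0,T] and d/dt E₂(t) = Ĩ₁ + Ĩ₂ + Ĩ₃, where Ĩ₁ = ∫₀ᴸ h₂'(x)·( (a²−(ū+u)²)·u_xx² + u_tx² ) dx (with h₂'(x) = −(1/L)·exp(−x/L)); Ĩ₂ = ∫₀ᴸ [ 4h₂(ū'+u_x)u_xx u_tx − 2h₂ u_t u_xx² + 2h₂(ū+u)(ū'+u_x)u_xx² − 2h₂ F_x u_xx − 2h₁(ū+u)u_t u_xx² − 2h₁(ū'+u_x)u_tx² + 2h₁ F_x u_tx ] dx; and Ĩ₃ is the boundary term [ (a²−(ū+u)²)·(2h₁ u_xx u_tx − h₂ u_xx²) − (2h₁(ū+u) + h₂)·u_tx² ] evaluated at x=L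 minus the same expression evaluated at x=0. -/
/-- `F_x = ∂ₓ F`, the spatial derivative of the residual. -/
noncomputable def FresX (a : ℝ) (ubar : ℝ → ℝ) (u utt utx uxx : ℝ → ℝ → ℝ) (t x : ℝ) : ℝ :=
  deriv (fun y => Fres a ubar u utt utx uxx t y) x

/-- The boundary integrand of `Ĩ₃`:
`(a² - (ū+u)²)(2 h₁ uₓₓ uₜₓ - h₂ uₓₓ²) - (2 h₁ (ū+u) + h₂) uₜₓ²`. -/
noncomputable def bdryTerm2 (a L k : ℝ) (ubar : ℝ → ℝ) (u uxx utx : ℝ → ℝ → ℝ)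
    (t x : ℝ) : ℝ :=
  (a ^ 2 - (ubar x + u t x) ^ 2) *
      (2 * k * uxx t x * utx t x - Real.exp (-x / L) * (uxx t x) ^ 2) -
    (2 * k * (ubar x + u t x) + Real.exp (-x / L)) * (utx t x) ^ 2

/-- Leibniz rule: if `∂ₜ f` exists everywhere and is jointly continuous, then
`∫ x in b..d, f t x` can be differentiated in `t` under the integral sign. -/
theorem hasDerivAt_intervalIntegral_of_continuous (f f' : ℝ → ℝ → ℝ) (b d t : ℝ)
    (hf : ∀ s x, HasDerivAt (fun r => f r x) (f' s x) s)
    (hfc : Continuous fun p : ℝ × ℝ => f p.1 p.2)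
    (hfc' : Continuous fun p : ℝ × ℝ => f' p.1 p.2) :
    HasDerivAt (fun s => ∫ x in b..d, f s x) (∫ x in b..d, f' t x) t := by
  have slice (s : ℝ) : Continuous (f s) :=
    hfc.comp (continuous_const.prodMk continuous_id)
  have slice' (s : ℝ) : Continuous (f' s) :=
    hfc'.comp (continuous_const.prodMk continuous_id)
  -- On the compact rectangle `[t - 1, t + 1] × [[b, d]]` a constant dominates `∂ₜ f`.
  obtain ⟨C, hC⟩ := ((isCompact_closedBall t 1).prod (isCompact_uIcc (a := b) (b := d))
    ).exists_bound_of_continuousOn hfc'.continuousOn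
  refine (intervalIntegral.hasDerivAt_integral_of_dominated_loc_of_deriv_le
    (bound := fun _ => C) (Metric.closedBall_mem_nhds t one_pos)
    (Filter.Eventually.of_forall fun s => (slice s).aestronglyMeasurable)
    ((slice t).intervalIntegrable _ _) (slice' t).aestronglyMeasurable
    (Filter.Eventually.of_forall fun x hx s hs => ?_) intervalIntegrable_const
    (Filter.Eventually.of_forall fun x _ s _ => hf s x)).2
  exact hC (s, x) ⟨hs, Set.uIoc_subset_uIcc hx⟩

/-- The residual differentiated by the product rule. -/
theorem FresX_eq (a : ℝ) (ubar : ℝ → ℝ) (u utt utx uxx : ℝ → ℝ → ℝ) (t x : ℝ)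
    {vx pt px qx : ℝ} (hv : HasDerivAt (fun y => ubar y + u t y) vx x)
    (htt : HasDerivAt (fun y => utt t y) pt x) (hp : HasDerivAt (fun y => utx t y) px x)
    (hq : HasDerivAt (fun y => uxx t y) qx x) :
    FresX a ubar u utt utx uxx t x =
      pt + 2 * vx * utx t x + 2 * (ubar x + u t x) * px +
        2 * (ubar x + u t x) * vx * uxx t x - (a ^ 2 - (ubar x + u t x) ^ 2) * qx := by
  have h := (htt.add ((hv.const_mul 2).mul hp)).sub (((hv.pow 2).const_sub (a ^ 2)).mul hq)
  refine (HasDerivAt.deriv (f := fun y => Fres a ubar u utt utx uxx t y) h).trans ?_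
  simp only [Pi.pow_apply]
  push_cast
  ring

/-- Time derivative of `E₂`: `d/dt E₂(t) = Ĩ₁ + Ĩ₂ + Ĩ₃`. -/
theorem time_derivative_of_E2
    (a L k T : ℝ) (ha : 0 < a) (hL : 0 < L) (hk : 0 < k) (hT : 0 < T)
    (ubar ubar' ubar'' : ℝ → ℝ)
    (hubar : ∀ x, HasDerivAt ubar (ubar' x) x)
    (hubar' : ∀ x, HasDerivAt ubar' (ubar'' x) x)
    (hubar''c : Continuous ubar'')
    (u ux ut uxx utx utt uxxx utxx uttx : ℝ → ℝ → ℝ)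
    (hux : ∀ t x, HasDerivAt (fun y => u t y) (ux t x) x)
    (hut : ∀ t x, HasDerivAt (fun s => u s x) (ut t x) t)
    (huxx : ∀ t x, HasDerivAt (fun y => ux t y) (uxx t x) x)
    (hutx : ∀ t x, HasDerivAt (fun s => ux s x) (utx t x) t)
    (hutx' : ∀ t x, HasDerivAt (fun y => ut t y) (utx t x) x)
    (hutt : ∀ t x, HasDerivAt (fun s => ut s x) (utt t x) t)
    (huxxx : ∀ t x, HasDerivAt (fun y => uxx t y) (uxxx t x) x)
    (hutxx : ∀ t x, HasDerivAt (fun s => uxx s x) (utxx t x) t)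
    (hutxx' : ∀ t x, HasDerivAt (fun y => utx t y) (utxx t x) x)
    (huttx : ∀ t x, HasDerivAt (fun s => utx s x) (uttx t x) t)
    (huttx' : ∀ t x, HasDerivAt (fun y => utt t y) (uttx t x) x)
    (hucont : Continuous fun p : ℝ × ℝ => u p.1 p.2)
    (huxcont : Continuous fun p : ℝ × ℝ => ux p.1 p.2)
    (hutcont : Continuous fun p : ℝ × ℝ => ut p.1 p.2)
    (huxxcont : Continuous fun p : ℝ × ℝ => uxx p.1 p.2)
    (hutxcont : Continuous fun p : ℝ × ℝ => utx p.1 p.2)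
    (huttcont : Continuous fun p : ℝ × ℝ => utt p.1 p.2)
    (huxxxcont : Continuous fun p : ℝ × ℝ => uxxx p.1 p.2)
    (hutxxcont : Continuous fun p : ℝ × ℝ => utxx p.1 p.2)
    (huttxcont : Continuous fun p : ℝ × ℝ => uttx p.1 p.2) :
    ∀ t ∈ Set.Icc (0 : ℝ) T,
      HasDerivAt (E2fun a L k ubar u uxx utx)
        ((∫ x in (0 : ℝ)..L,
            (-(1 / L) * Real.exp (-x / L)) *
              ((a ^ 2 - (ubar x + u t x) ^ 2) * (uxx t x) ^ 2 + (utx t x) ^ 2)) +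
          (∫ x in (0 : ℝ)..L,
            (4 * Real.exp (-x / L) * (ubar' x + ux t x) * uxx t x * utx t x -
              2 * Real.exp (-x / L) * ut t x * (uxx t x) ^ 2 +
              2 * Real.exp (-x / L) * (ubar x + u t x) * (ubar' x + ux t x) * (uxx t x) ^ 2 -
              2 * Real.exp (-x / L) * FresX a ubar u utt utx uxx t x * uxx t x -
              2 * k * (ubar x + u t x) * ut t x * (uxx t x) ^ 2 -
              2 * k * (ubar' x + ux t x) * (utx t x) ^ 2 +
              2 * k * FresX a ubar u utt utx uxx t x * utx t x)) +
          (bdryTerm2 a L k ubar u uxx utx t L - bdryTerm2 a L k ubar u uxx utx t 0)) t := by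
  intro t _
  have hv (s x : ℝ) : HasDerivAt (fun y => ubar y + u s y) (ubar' x + ux s x) x :=
    (hubar x).add (hux s x)
  have hvt (s x : ℝ) : HasDerivAt (fun r => ubar x + u r x) (ut s x) s :=
    (hut s x).const_add _
  have hh (x : ℝ) : HasDerivAt (fun y => Real.exp (-y / L)) (-(1 / L) * Real.exp (-x / L)) x := by
    refine ((hasDerivAt_neg' x).div_const L).exp.congr_deriv ?_
    ring
  have hbc : Continuous ubar :=
    continuous_iff_continuousAt.2 fun x => (hubar x).continuousAt
  have hbc' : Continuous ubar' :=
    continuous_iff_continuousAt.2 fun x => (hubar' x).continuousAt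
  have slice {g : ℝ → ℝ → ℝ} (hg : Continuous fun p : ℝ × ℝ => g p.1 p.2) : Continuous (g t) :=
    hg.comp (continuous_const.prodMk continuous_id)
  have cu := slice hucont
  have cux := slice huxcont
  have cut := slice hutcont
  have cq := slice huxxcont
  have cp := slice hutxcont
  have cqx := slice huxxxcont
  have cpx := slice hutxxcont
  have cpt := slice huttxcont
  -- The time derivative of the integrand of `E₂`.
  let eT : ℝ → ℝ → ℝ := fun s x =>
    k * (-2 * (ubar x + u s x) * ut s x * uxx s x ^ 2 +
        2 * (a ^ 2 - (ubar x + u s x) ^ 2) * uxx s x * utxx s x + 2 * utx s x * uttx s x) -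
      2 * Real.exp (-x / L) *
        (ut s x * uxx s x ^ 2 + 2 * (ubar x + u s x) * uxx s x * utxx s x +
          uttx s x * uxx s x + utx s x * utxx s x)
  have hE : HasDerivAt (E2fun a L k ubar u uxx utx) (∫ x in (0 : ℝ)..L, eT t x) t := by
    refine hasDerivAt_intervalIntegral_of_continuous (fun s x =>
      k * ((a ^ 2 - (ubar x + u s x) ^ 2) * uxx s x ^ 2 + utx s x ^ 2) -
        2 * Real.exp (-x / L) * ((ubar x + u s x) * uxx s x ^ 2 + utx s x * uxx s x))
      eT 0 L t (fun s x => ?_) (by fun_prop) (by fun_prop)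
    have h1 := ((((hvt s x).pow 2).const_sub (a ^ 2)).mul ((hutxx s x).pow 2)).add
      ((huttx s x).pow 2)
    have h2 := ((hvt s x).mul ((hutxx s x).pow 2)).add ((huttx s x).mul (hutxx s x))
    refine ((h1.const_mul k).sub (h2.const_mul (2 * Real.exp (-x / L)))).congr_deriv ?_
    simp only [eT, Pi.pow_apply]
    push_cast
    ring
  -- The space derivative of the boundary expression.
  let bX : ℝ → ℝ := fun x =>
    -2 * (ubar x + u t x) * (ubar' x + ux t x) *
        (2 * k * uxx t x * utx t x - Real.exp (-x / L) * uxx t x ^ 2) +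
      (a ^ 2 - (ubar x + u t x) ^ 2) *
        (2 * k * uxxx t x * utx t x + 2 * k * uxx t x * utxx t x +
          1 / L * Real.exp (-x / L) * uxx t x ^ 2 -
          2 * Real.exp (-x / L) * uxx t x * uxxx t x) -
      (2 * k * (ubar' x + ux t x) - 1 / L * Real.exp (-x / L)) * utx t x ^ 2 -
      2 * (2 * k * (ubar x + u t x) + Real.exp (-x / L)) * utx t x * utxx t x
  have hbX (x : ℝ) : HasDerivAt (bdryTerm2 a L k ubar u uxx utx t) (bX x) x := by
    have h1 := (((huxxx t x).const_mul (2 * k)).mul (hutxx' t x)).sub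
      ((hh x).mul ((huxxx t x).pow 2))
    have h2 := (((hv t x).pow 2).const_sub (a ^ 2)).mul h1
    have h3 := (((hv t x).const_mul (2 * k)).add (hh x)).mul ((hutxx' t x).pow 2)
    refine (h2.sub h3).congr_deriv ?_
    simp only [bX, Pi.pow_apply, Pi.mul_apply, Pi.sub_apply, Pi.add_apply]
    push_cast
    ring
  have cbX : Continuous bX := by fun_prop
  have hFX (x : ℝ) := FresX_eq a ubar u utt utx uxx t x
    (hv t x) (huttx' t x) (hutxx' t x) (huxxx t x)
  have cFX : Continuous (FresX a ubar u utt utx uxx t) := by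
    rw [funext hFX]
    fun_prop
  refine hE.congr_deriv ?_
  rw [← intervalIntegral.integral_eq_sub_of_hasDerivAt (fun x _ => hbX x)
      (cbX.intervalIntegrable _ _),
    ← intervalIntegral.integral_add (Continuous.intervalIntegrable (by fun_prop) _ _)
      (Continuous.intervalIntegrable (by fun_prop) _ _),
    ← intervalIntegral.integral_add (Continuous.intervalIntegrable (by fun_prop) _ _)
      (cbX.intervalIntegrable _ _)]
  refine intervalIntegral.integral_congr fun x _ => ?_
  simp only [hFX, eT, bX]
  ring
end
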